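/- arXiv:1311.2011 — 4 statements merged into one kernel-verified Lean document; each statement's English description precedes it below -/
import Mathlib

section
/- Let X be a Tychonoff topological space and let 𝔅 be a bornology with compact base on X. Then C_𝔅(X) is productively countably tight if and only if every 𝔅-cover of X consisting of G_δ-sets has a countable 𝔅-subcover. -/
open Set Topology

universe u

/-- A bornology on `X`: a collection of subsets covering `X`, closed under
taking subsets and under finite unions. -/
structure IsBornology {X : Type*} (𝔅 : Set (Set X)) : Prop where
  covers : ⋃₀ 𝔅 = Set.univ
  empty_mem : ∅ ∈ 𝔅
  subset_mem : ∀ ⦃A B : Set X⦄, B ∈ 𝔅 → A ⊆ B → A ∈ 𝔅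
  union_mem : ∀ ⦃A B : Set X⦄, A ∈ 𝔅 → B ∈ 𝔅 → A ∪ B ∈ 𝔅

/-- `𝔅` has a compact base: every member of `𝔅` is contained in a compact member of `𝔅`. -/
def HasCompactBase {X : Type*} [TopologicalSpace X] (𝔅 : Set (Set X)) : Prop :=
  ∀ B ∈ 𝔅, ∃ K ∈ 𝔅, IsCompact K ∧ B ⊆ K

/-- The set of continuous real-valued functions on `X` (as a bare type, to be
topologized by a bornology). -/
def CFn (X : Type u) [TopologicalSpace X] : Type u := {f : X → ℝ // Continuous f}

/-- The zero function as an element of `CFn X`. -/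
def zeroFn (X : Type u) [TopologicalSpace X] : CFn X := ⟨fun _ => 0, continuous_const⟩

/-- The basic "ball" `⟨B, ε⟩[f] = {g : ∀ x ∈ B, |f x − g x| < ε}`. -/
def unifBall {X : Type u} [TopologicalSpace X] (f : CFn X) (B : Set X) (ε : ℝ) :
    Set (CFn X) :=
  {g | ∀ x ∈ B, |f.1 x - g.1 x| < ε}

/-- The topology of uniform convergence on members of a bornology `𝔅`:
a set is open iff around each of its points it contains a basic ball
`⟨B, ε⟩[f]` with `B ∈ 𝔅`, `ε > 0`.  This makes `CFn X` into `C_𝔅(X)`. -/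
def bornTopology {X : Type u} [TopologicalSpace X] (𝔅 : Set (Set X))
    (hB : IsBornology 𝔅) : TopologicalSpace (CFn X) where
  IsOpen U := ∀ f ∈ U, ∃ B ∈ 𝔅, ∃ ε > (0 : ℝ), unifBall f B ε ⊆ U
  isOpen_univ := fun f _ => ⟨∅, hB.empty_mem, 1, one_pos, fun _ _ => trivial⟩
  isOpen_inter := by
    intro U V hU hV f hf
    obtain ⟨B₁, hB₁, ε₁, hε₁, h₁⟩ := hU f hf.1
    obtain ⟨B₂, hB₂, ε₂, hε₂, h₂⟩ := hV f hf.2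
    refine ⟨B₁ ∪ B₂, hB.union_mem hB₁ hB₂, min ε₁ ε₂, lt_min hε₁ hε₂, fun g hg => ⟨?_, ?_⟩⟩
    · exact h₁ fun x hx => lt_of_lt_of_le (hg x (Or.inl hx)) (min_le_left _ _)
    · exact h₂ fun x hx => lt_of_lt_of_le (hg x (Or.inr hx)) (min_le_right _ _)
  isOpen_sUnion := by
    intro S hS f hf
    obtain ⟨U, hU, hfU⟩ := hf
    obtain ⟨B, hB', ε, hε, h⟩ := hS U hU f hfU
    exact ⟨B, hB', ε, hε, h.trans (Set.subset_sUnion_of_mem hU)⟩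

/-- `Ω_z`: the family of all subsets of `Z ∖ {z}` having `z` in their closure. -/
def OmegaAt {Z : Type*} [TopologicalSpace Z] (z : Z) : Set (Set Z) :=
  {A | A ⊆ {z}ᶜ ∧ z ∈ closure A}

/-- `𝒢` is a `𝔅`-cover of `X`: every member of `𝔅` is contained in a member of `𝒢`. -/
def IsBCover {X : Type*} (𝔅 : Set (Set X)) (𝒢 : Set (Set X)) : Prop :=
  ∀ B ∈ 𝔅, ∃ G ∈ 𝒢, B ⊆ G

/-- `𝒪_𝔅`: the family of all open `𝔅`-covers of `X`. -/
def OpenBCovers {X : Type*} [TopologicalSpace X] (𝔅 : Set (Set X)) : Set (Set (Set X)) :=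
  {𝒰 | (∀ U ∈ 𝒰, IsOpen U) ∧ IsBCover 𝔅 𝒰}

/-- `𝒢` is a K-cover of `X`: every compact subset of `X` is contained in a member of `𝒢`. -/
def IsKCover {X : Type*} [TopologicalSpace X] (𝒢 : Set (Set X)) : Prop :=
  ∀ K : Set X, IsCompact K → ∃ G ∈ 𝒢, K ⊆ G

/-- `𝒦`: the family of all open K-covers of `X`. -/
def KCovers (X : Type*) [TopologicalSpace X] : Set (Set (Set X)) :=
  {𝒰 | (∀ U ∈ 𝒰, IsOpen U) ∧ IsKCover 𝒰}

/-- Player II has a winning strategy in the game `G₁(𝒜, 𝒞)` (of length `ω`):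
a function assigning to each finite sequence `(A₀, …, Aₙ)` of moves of player I an
element of `Aₙ`, such that in any play following it the chosen points form a member of `𝒞`. -/
def G1WinII {T : Type*} (𝒜 𝒞 : Set (Set T)) : Prop :=
  ∃ σ : (n : ℕ) → (Fin (n + 1) → Set T) → T,
    (∀ (n : ℕ) (h : Fin (n + 1) → Set T), (∀ i, h i ∈ 𝒜) → σ n h ∈ h (Fin.last n)) ∧
    ∀ A : ℕ → Set T, (∀ n, A n ∈ 𝒜) →
      (Set.range fun n => σ n fun i => A i.1) ∈ 𝒞

/-- Player II has a winning strategy in the transfinite game `G₁^α(𝒜, 𝒞)` of length `α`. -/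
def G1WinIIOrd {T : Type*} (α : Ordinal.{0}) (𝒜 𝒞 : Set (Set T)) : Prop :=
  ∃ σ : (γ : {γ : Ordinal.{0} // γ < α}) → ({δ : Ordinal.{0} // δ ≤ γ.1} → Set T) → T,
    (∀ (γ : {γ : Ordinal.{0} // γ < α}) (h : {δ : Ordinal.{0} // δ ≤ γ.1} → Set T),
      (∀ δ, h δ ∈ 𝒜) → σ γ h ∈ h ⟨γ.1, le_rfl⟩) ∧
    ∀ A : {γ : Ordinal.{0} // γ < α} → Set T, (∀ γ, A γ ∈ 𝒜) →
      (Set.range fun γ : {γ : Ordinal.{0} // γ < α} =>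
        σ γ fun δ => A ⟨δ.1, lt_of_le_of_lt δ.2 γ.2⟩) ∈ 𝒞

/-- The selection principle `S₁(𝒜, 𝒞)`. -/
def S1 {T : Type*} (𝒜 𝒞 : Set (Set T)) : Prop :=
  ∀ A : ℕ → Set T, (∀ n, A n ∈ 𝒜) →
    ∃ a : ℕ → T, (∀ n, a n ∈ A n) ∧ Set.range a ∈ 𝒞

/-- `Z` has countable tightness. -/
def CountablyTight (Z : Type*) [TopologicalSpace Z] : Prop :=
  ∀ (z : Z) (A : Set Z), z ∈ closure A → ∃ B ⊆ A, B.Countable ∧ z ∈ closure B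

/-- `Z` is productively countably tight: `Z × Y` has countable tightness
for every countably tight space `Y`. -/
def ProductivelyCountablyTight (Z : Type u) [TopologicalSpace Z] : Prop :=
  ∀ (Y : Type u) [TopologicalSpace Y], CountablyTight Y → CountablyTight (Z × Y)

/-- `Z` has tightness at most `κ`. -/
def TightnessLE (Z : Type u) [TopologicalSpace Z] (κ : Cardinal.{u}) : Prop :=
  ∀ (z : Z) (A : Set Z), z ∈ closure A → ∃ B ⊆ A, Cardinal.mk B ≤ κ ∧ z ∈ closure B

/-- `κ ∈ Sp(Z)`: for every space `Y` of tightness at most `κ`, the product `Z × Y`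
has tightness at most `κ`. -/
def MemSp (Z : Type u) [TopologicalSpace Z] (κ : Cardinal.{u}) : Prop :=
  ∀ (Y : Type u) [TopologicalSpace Y], TightnessLE Y κ → TightnessLE (Z × Y) κ

/-- `G` is a `G_κ`-set: an intersection of at most `κ` open sets. -/
def IsGKappaSet {X : Type u} [TopologicalSpace X] (κ : Cardinal.{u}) (G : Set X) : Prop :=
  ∃ 𝒪 : Set (Set X), (∀ O ∈ 𝒪, IsOpen O) ∧ Cardinal.mk 𝒪 ≤ κ ∧ G = ⋂₀ 𝒪

/-- `G` is a `G_δ`-set: an intersection of countably many open sets. -/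
def IsGDeltaSet {X : Type*} [TopologicalSpace X] (G : Set X) : Prop :=
  ∃ 𝒪 : Set (Set X), (∀ O ∈ 𝒪, IsOpen O) ∧ 𝒪.Countable ∧ G = ⋂₀ 𝒪

/-- A family `ℙ` of collections of subsets of `Z` is `κ`-singular at `z`. -/
def KappaSingularAt {Z : Type u} [TopologicalSpace Z] (κ : Cardinal.{u})
    (ℙ : Set (Set (Set Z))) (z : Z) : Prop :=
  (∀ ξ ∈ ℙ, ∀ A ∈ ξ, Cardinal.mk A ≤ κ) ∧
  (∀ ξ ∈ ℙ, ∀ F : Finset (Set Z), ↑F ⊆ ξ → (⋂₀ (F : Set (Set Z))).Nonempty) ∧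
  (∀ O : Set Z, IsOpen O → z ∈ O → ∃ ξ ∈ ℙ, ∃ A ∈ ξ, A ⊆ O) ∧
  (∀ ℰ ⊆ ℙ, Cardinal.mk ℰ ≤ κ → ∃ c : Set (Set Z) → Set Z,
    (∀ ξ ∈ ℰ, c ξ ∈ ξ) ∧ z ∉ closure (⋃ ξ ∈ ℰ, c ξ))

/-- `X` is an Alster space. -/
def Alster (X : Type*) [TopologicalSpace X] : Prop :=
  ∀ 𝒢 : Set (Set X), (∀ G ∈ 𝒢, IsGDeltaSet G) → IsKCover 𝒢 →
    ∃ 𝒢' ⊆ 𝒢, 𝒢'.Countable ∧ ⋃₀ 𝒢' = Set.univ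

/-- `X` is strongly Alster. -/
def StronglyAlster (X : Type*) [TopologicalSpace X] : Prop :=
  ∀ 𝒢 : Set (Set X), (∀ G ∈ 𝒢, IsGDeltaSet G) → IsKCover 𝒢 →
    ∃ 𝒢' ⊆ 𝒢, 𝒢'.Countable ∧ IsKCover 𝒢'

/-- `X` is productively Lindelöf. -/
def ProductivelyLindelof (X : Type u) [TopologicalSpace X] : Prop :=
  ∀ (Y : Type u) [TopologicalSpace Y], LindelofSpace Y → LindelofSpace (X × Y)

/-- `X` is hemicompact. -/
def Hemicompact (X : Type*) [TopologicalSpace X] : Prop :=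
  ∃ K : ℕ → Set X, (∀ n, IsCompact (K n)) ∧ ∀ C : Set X, IsCompact C → ∃ n, C ⊆ K n

/-!
Productive countable tightness of `C_𝔅(X)` only has to be tested against sequential fans. If `F` is
a family of continuous functions whose zero sets form a `𝔅`-cover, then in the product with the fan
on `F` the pairs (`n • h`, `n`-th point of the spine `h`) accumulate at (`0`, apex), and a countable
set of such pairs accumulates there only if the zero sets of the functions involved still form a
`𝔅`-cover. By complete regularity, zero sets refine every `𝔅`-cover by `G_δ`-sets. Conversely, if
`(f, y) ∈ closure A`, countable tightness of `Y` yields for each `B ∈ 𝔅` countable sets `Cₙ ⊆ A`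
that are `1 / (n + 1)`-close to `f` on `B` and have `y` in the closure of their projection; the
`x ∈ X` at which all of these estimates hold form a `G_δ`-set containing `B`, so a countable
`𝔅`-subcover selects a countable subset of `A`.
-/

open Filter

section CountableTightness

theorem exists_countable_subset_image_eq {α β : Type*} {f : α → β} {s : Set α} {t : Set β}
    (ht : t.Countable) (hts : t ⊆ f '' s) : ∃ u ⊆ s, u.Countable ∧ f '' u = t := by
  obtain ⟨u, hus, hinj, rfl⟩ := SurjOn.exists_subset_injOn_image_eq hts
  exact ⟨u, hus, countable_of_injective_of_countable_image hinj ht, rfl⟩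

variable {α Y Z : Type*} [TopologicalSpace Y] [TopologicalSpace Z]

theorem CountablyTight.exists_countable_subset_mem_closure_image (hZ : CountablyTight Z)
    {g : α → Z} {s : Set α} {z : Z} (hz : z ∈ closure (g '' s)) :
    ∃ u ⊆ s, u.Countable ∧ z ∈ closure (g '' u) := by
  obtain ⟨t, hts, ht, hzt⟩ := hZ z _ hz
  obtain ⟨u, hus, hu, rfl⟩ := exists_countable_subset_image_eq ht hts
  exact ⟨u, hus, hu, hzt⟩

theorem mem_closure_prod_iff {z : Z} {y : Y} {A : Set (Z × Y)} :
    (z, y) ∈ closure A ↔ ∀ U ∈ 𝓝 z, y ∈ closure (Prod.snd '' (A ∩ Prod.fst ⁻¹' U)) := by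
  simp only [mem_closure_iff_nhds]
  constructor
  · rintro h U hU V hV
    obtain ⟨p, ⟨hpU, hpV⟩, hpA⟩ := h (U ×ˢ V) (prod_mem_nhds hU hV)
    exact ⟨p.2, hpV, p, ⟨hpA, hpU⟩, rfl⟩
  · intro h W hW
    obtain ⟨U, hU, V, hV, hUV⟩ := mem_nhds_prod_iff.1 hW
    obtain ⟨_, hpV, p, ⟨hpA, hpU⟩, rfl⟩ := h U hU V hV
    exact ⟨p, hUV ⟨hpU, hpV⟩, hpA⟩

end CountableTightness

/-- The sequential fan with spines indexed by `ι`: disjoint copies of a convergent sequence, indexed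
by `ι`, with their limits identified to a single point `apex`. It is the countably tight space
against which productive countable tightness is tested. -/
inductive SequentialFan (ι : Type*)
  | apex : SequentialFan ι
  | point (i : ι) (n : ℕ) : SequentialFan ι

namespace SequentialFan

variable {ι Z : Type*} [TopologicalSpace Z]

instance : TopologicalSpace (SequentialFan ι) :=
  nhdsAdjoint apex (⨆ i, map (point i) atTop)

theorem nhds_point (i : ι) (n : ℕ) : 𝓝 (point i n) = pure (point i n) :=
  nhds_nhdsAdjoint_of_ne _ (by simp)

theorem frequently_nhds_apex {p : SequentialFan ι → Prop} :
    (∃ᶠ x in 𝓝 apex, p x) ↔ p apex ∨ ∃ i, ∃ᶠ n in atTop, p (point i n) := by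
  have nhds_apex : 𝓝 (apex : SequentialFan ι) = pure apex ⊔ ⨆ i, map (point i) atTop :=
    nhds_nhdsAdjoint_same _ _
  simp only [nhds_apex, frequently_sup, frequently_pure, frequently_iSup, frequently_map]

theorem countablyTight : CountablyTight (SequentialFan ι) := by
  intro z A hz
  suffices z ∈ A ∨ ∃ i, z ∈ closure (A ∩ range (point i)) by
    obtain hzA | ⟨i, hi⟩ := this
    · exact ⟨{z}, singleton_subset_iff.2 hzA, countable_singleton z, subset_closure rfl⟩
    · exact ⟨_, inter_subset_left, (countable_range _).mono inter_subset_right, hi⟩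
  rw [mem_closure_iff_frequently] at hz
  cases z with
  | point i n => exact .inl (by simpa only [nhds_point, frequently_pure] using hz)
  | apex =>
    refine (frequently_nhds_apex.1 hz).imp_right fun ⟨i, hi⟩ => ⟨i, ?_⟩
    exact mem_closure_iff_frequently.2 <|
      frequently_nhds_apex.2 <| .inr ⟨i, hi.mono fun n hn => ⟨hn, mem_range_self n⟩⟩

theorem mem_closure_image_prodMk_apex_iff {φ : ι × ℕ → Z} {C : Set (ι × ℕ)} {z : Z} :
    (z, apex) ∈ closure ((fun p => (φ p, point p.1 p.2)) '' C) ↔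
      ∀ U ∈ 𝓝 z, ∃ i, ∃ᶠ n in atTop, (i, n) ∈ C ∧ φ (i, n) ∈ U := by
  rw [mem_closure_prod_iff]
  refine forall₂_congr fun U _ => ?_
  rw [mem_closure_iff_frequently, frequently_nhds_apex]
  simp

end SequentialFan

section ZeroSets

variable {X : Type*} [TopologicalSpace X]

theorem exists_preimage_zero_eq_iInter {ι : Type*} [Countable ι] (f : ι → C(X, ℝ)) :
    ∃ h : C(X, ℝ), h ⁻¹' {0} = ⋂ i, f i ⁻¹' {0} := by
  obtain ⟨d, hd, -⟩ := perfectlyNormalSpace_iff_forall_isClosed_preimage_zero.1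
    (inferInstance : PerfectlyNormalSpace (ι → ℝ)) {0} isClosed_singleton
  refine ⟨d.comp (.pi f), ?_⟩
  rw [ContinuousMap.coe_comp, preimage_comp, ← hd]
  ext x
  simp [funext_iff]

variable [CompletelyRegularSpace X] {K : Set X}

theorem exists_preimage_zero_between_isCompact_isOpen (hK : IsCompact K) {O : Set X}
    (hO : IsOpen O) (hKO : K ⊆ O) : ∃ h : C(X, ℝ), K ⊆ h ⁻¹' {0} ∧ h ⁻¹' {0} ⊆ O := by
  obtain ⟨V, hV, rfl⟩ := isInducing_stoneCechUnit.isOpen_iff.1 hO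
  obtain ⟨f, hf₀, hf₁, -⟩ := exists_continuous_zero_one_of_isClosed
    (hK.image continuous_stoneCechUnit).isClosed hV.isClosed_compl
    (disjoint_compl_right_iff_subset.2 (image_subset_iff.2 hKO))
  refine ⟨f.comp ⟨stoneCechUnit, continuous_stoneCechUnit⟩,
    fun x hx => hf₀ (mem_image_of_mem _ hx), fun x (hx : f (stoneCechUnit x) = 0) => ?_⟩
  by_contra hxV
  exact zero_ne_one (hx.symm.trans (hf₁ hxV))

theorem exists_preimage_zero_between_isCompact_isGδ (hK : IsCompact K) {G : Set X}
    (hG : IsGδ G) (hKG : K ⊆ G) : ∃ h : C(X, ℝ), K ⊆ h ⁻¹' {0} ∧ h ⁻¹' {0} ⊆ G := by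
  obtain ⟨O, hO, rfl⟩ := hG.eq_iInter_nat
  choose f hKf hfO using fun n =>
    exists_preimage_zero_between_isCompact_isOpen hK (hO n) (hKG.trans (iInter_subset O n))
  obtain ⟨h, hh⟩ := exists_preimage_zero_eq_iInter f
  exact ⟨h, hh ▸ subset_iInter hKf, hh ▸ iInter_mono hfO⟩

end ZeroSets

section BCovers

variable {X : Type*} {𝔅 : Set (Set X)}

theorem IsBCover.exists_countable_subcover_of_refines {𝒢 ℋ : Set (Set X)} (hℋ : IsBCover 𝔅 ℋ)
    (hℋc : ℋ.Countable) (href : ∀ H ∈ ℋ, ∃ G ∈ 𝒢, H ⊆ G) :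
    ∃ 𝒢' ⊆ 𝒢, 𝒢'.Countable ∧ IsBCover 𝔅 𝒢' := by
  choose! G hG𝒢 hHG using href
  refine ⟨G '' ℋ, image_subset_iff.2 hG𝒢, hℋc.image G, fun B hB => ?_⟩
  obtain ⟨H, hH, hBH⟩ := hℋ B hB
  exact ⟨G H, mem_image_of_mem G hH, hBH.trans (hHG H hH)⟩

variable [TopologicalSpace X]

/-- The `𝔅`-version of the strong Alster property: every `𝔅`-cover by `G_δ`-sets has a countable
`𝔅`-subcover. It characterizes productive countable tightness of `C_𝔅(X)`. -/
def GδBLindelof (𝔅 : Set (Set X)) : Prop :=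
  ∀ 𝒢 : Set (Set X), (∀ G ∈ 𝒢, IsGDeltaSet G) → IsBCover 𝔅 𝒢 →
    ∃ 𝒢' ⊆ 𝒢, 𝒢'.Countable ∧ IsBCover 𝔅 𝒢'

theorem GδBLindelof.exists_countable_isBCover_image (h : GδBLindelof 𝔅) {ι : Type*} {s : Set ι}
    {G : ι → Set X} (hG : ∀ i ∈ s, IsGδ (G i)) (hs : IsBCover 𝔅 (G '' s)) :
    ∃ t ⊆ s, t.Countable ∧ IsBCover 𝔅 (G '' t) := by
  obtain ⟨𝒢', h𝒢', hc, hcov⟩ := h (G '' s) (forall_mem_image.2 hG) hs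
  obtain ⟨t, hts, ht, rfl⟩ := exists_countable_subset_image_eq hc h𝒢'
  exact ⟨t, hts, ht, hcov⟩

theorem IsBCover.exists_preimage_zero_refinement [CompletelyRegularSpace X]
    (hcb : HasCompactBase 𝔅) {𝒢 : Set (Set X)} (h𝒢 : IsBCover 𝔅 𝒢) (hG : ∀ G ∈ 𝒢, IsGδ G) :
    IsBCover 𝔅 (range fun h : {h : C(X, ℝ) // ∃ G ∈ 𝒢, h ⁻¹' {0} ⊆ G} => h.1 ⁻¹' {0}) := by
  intro B hB
  obtain ⟨K, hK𝔅, hK, hBK⟩ := hcb B hB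
  obtain ⟨G, hG𝒢, hKG⟩ := h𝒢 K hK𝔅
  obtain ⟨h, hKh, hhG⟩ := exists_preimage_zero_between_isCompact_isGδ hK (hG G hG𝒢) hKG
  exact ⟨_, ⟨⟨h, G, hG𝒢, hhG⟩, rfl⟩, hBK.trans hKh⟩

end BCovers

section BornTopology

variable {X : Type u} [TopologicalSpace X] {𝔅 : Set (Set X)} (hB : IsBornology 𝔅)

theorem unifBall_mem_nhds (f : CFn X) {B : Set X} (hB𝔅 : B ∈ 𝔅) {ε : ℝ} (hε : 0 < ε) :
    unifBall f B ε ∈ @nhds (CFn X) (bornTopology 𝔅 hB) f := by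
  let _ := bornTopology 𝔅 hB
  -- `unifBall f B ε` need not be open; the functions that are uniformly `δ`-close to `f` on `B`
  -- for some `δ < ε` form an open subset of it.
  refine mem_nhds_iff.2 ⟨{g | ∃ δ < ε, ∀ x ∈ B, |f.1 x - g.1 x| ≤ δ}, ?_, ?_, ⟨0, hε, by simp⟩⟩
  · rintro g ⟨δ, hδ, hg⟩ x hx
    exact (hg x hx).trans_lt hδ
  · rintro g ⟨δ, hδ, hg⟩
    refine ⟨B, hB𝔅, (ε - δ) / 2, by linarith, fun k hk => ⟨(ε + δ) / 2, by linarith, ?_⟩⟩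
    intro x hx
    linarith [hg x hx, hk x hx, abs_sub_le (f.1 x) (g.1 x) (k.1 x)]

theorem mem_nhds_bornTopology_iff {f : CFn X} {U : Set (CFn X)} :
    U ∈ @nhds (CFn X) (bornTopology 𝔅 hB) f ↔ ∃ B ∈ 𝔅, ∃ ε > 0, unifBall f B ε ⊆ U := by
  let _ := bornTopology 𝔅 hB
  constructor
  · intro hU
    obtain ⟨V, hVU, hV, hfV⟩ := mem_nhds_iff.1 hU
    obtain ⟨B, hB𝔅, ε, hε, hBV⟩ := hV f hfV
    exact ⟨B, hB𝔅, ε, hε, hBV.trans hVU⟩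
  · rintro ⟨B, hB𝔅, ε, hε, hBU⟩
    exact mem_of_superset (unifBall_mem_nhds hB f hB𝔅 hε) hBU

end BornTopology

section FanTest

variable {X : Type u} [TopologicalSpace X]

/-- The multiple `n • h` of a continuous function, as a point of `CFn X`. As `n` grows, these
points detect whether `h` vanishes on a given set. -/
def natMul (n : ℕ) (h : C(X, ℝ)) : CFn X := ⟨n • h, (n • h).continuous⟩

theorem frequently_natMul_mem_unifBall_zeroFn_iff {h : C(X, ℝ)} {B : Set X} {ε : ℝ} (hε : 0 < ε) :
    (∃ᶠ n in atTop, natMul n h ∈ unifBall (zeroFn X) B ε) ↔ B ⊆ h ⁻¹' {0} := by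
  have mem_iff (n : ℕ) : natMul n h ∈ unifBall (zeroFn X) B ε ↔ ∀ x ∈ B, n * |h x| < ε := by
    refine forall₂_congr fun x _ => ?_
    simp [natMul, zeroFn, abs_mul]
  simp only [mem_iff]
  constructor
  · intro hfreq x hx
    by_contra hne
    have hlarge : ∀ᶠ n : ℕ in atTop, ε ≤ n * |h x| :=
      (tendsto_natCast_atTop_atTop.atTop_mul_const (abs_pos.2 hne)).eventually_ge_atTop ε
    obtain ⟨n, hsmall, hn⟩ := (hfreq.and_eventually hlarge).exists
    exact (hsmall x hx).not_ge hn
  · intro hB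
    refine Frequently.of_forall fun n x hx => ?_
    rwa [show h x = 0 from hB hx, abs_zero, mul_zero]

theorem exists_countable_isBCover_preimage_zero {𝔅 : Set (Set X)} (hB : IsBornology 𝔅)
    {ι : Type*} {h : ι → C(X, ℝ)} (hh : IsBCover 𝔅 (range fun i => h i ⁻¹' {0}))
    (htight : letI := bornTopology 𝔅 hB; CountablyTight (CFn X × SequentialFan ι)) :
    ∃ s : Set ι, s.Countable ∧ IsBCover 𝔅 ((fun i => h i ⁻¹' {0}) '' s) := by
  let _ := bornTopology 𝔅 hB
  let φ : ι × ℕ → CFn X := fun p => natMul p.2 (h p.1)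
  have hmem : (zeroFn X, SequentialFan.apex) ∈
      closure ((fun p => (φ p, SequentialFan.point p.1 p.2)) '' univ) := by
    refine SequentialFan.mem_closure_image_prodMk_apex_iff.2 fun U hU => ?_
    obtain ⟨B, hB𝔅, ε, hε, hBU⟩ := (mem_nhds_bornTopology_iff hB).1 hU
    obtain ⟨_, ⟨i, rfl⟩, hBi⟩ := hh B hB𝔅
    exact ⟨i, ((frequently_natMul_mem_unifBall_zeroFn_iff hε).2 hBi).mono
      fun n hn => ⟨mem_univ _, hBU hn⟩⟩
  obtain ⟨C, -, hC, hmemC⟩ := htight.exists_countable_subset_mem_closure_image hmem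
  refine ⟨Prod.fst '' C, hC.image _, fun B hB𝔅 => ?_⟩
  obtain ⟨i, hi⟩ := SequentialFan.mem_closure_image_prodMk_apex_iff.1 hmemC _
    (unifBall_mem_nhds hB (zeroFn X) hB𝔅 one_pos)
  obtain ⟨n, hn, -⟩ := hi.exists
  exact ⟨_, ⟨i, ⟨(i, n), hn, rfl⟩, rfl⟩,
    (frequently_natMul_mem_unifBall_zeroFn_iff one_pos).1 (hi.mono fun _ => And.right)⟩

theorem gδBLindelof_of_productivelyCountablyTight [CompletelyRegularSpace X] {𝔅 : Set (Set X)}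
    (hB : IsBornology 𝔅) (hcb : HasCompactBase 𝔅)
    (htight : @ProductivelyCountablyTight (CFn X) (bornTopology 𝔅 hB)) : GδBLindelof 𝔅 := by
  intro 𝒢 hG h𝒢
  obtain ⟨s, hs, hcov⟩ := exists_countable_isBCover_preimage_zero hB
    (h𝒢.exists_preimage_zero_refinement hcb hG) (htight _ SequentialFan.countablyTight)
  exact hcov.exists_countable_subcover_of_refines (hs.image _)
    (forall_mem_image.2 fun h _ => h.2)

end FanTest

section Approximation

variable {X : Type u} {Y : Type*} [TopologicalSpace X]

/-- The points of `X` at which, for every `n`, all functions occurring in `C n` are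
`1 / (n + 1)`-close to `f`: the `G_δ`-sets to which the covering property is applied. The sets `C n`
consist of pairs because they are subsets of a set with `(f, y)` in its closure. -/
def approxSet (f : CFn X) (C : ℕ → Set (CFn X × Y)) : Set X :=
  {x | ∀ n, ∀ p ∈ C n, |f.1 x - p.1.1 x| < 1 / (n + 1)}

theorem isGδ_approxSet (f : CFn X) {C : ℕ → Set (CFn X × Y)} (hC : ∀ n, (C n).Countable) :
    IsGδ (approxSet f C) := by
  simp only [approxSet, ofPred_forall]
  exact .iInter fun n => .biInter_of_isOpen (hC n) fun p _ =>
    isOpen_lt (f.2.sub p.1.2).abs continuous_const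

variable [TopologicalSpace Y] {𝔅 : Set (Set X)} (hB : IsBornology 𝔅) {f : CFn X} {y : Y}

theorem exists_countable_seq_subset_approxSet (hY : CountablyTight Y) {A : Set (CFn X × Y)}
    (hA : letI := bornTopology 𝔅 hB; (f, y) ∈ closure A) {B : Set X} (hB𝔅 : B ∈ 𝔅) :
    ∃ C : ℕ → Set (CFn X × Y),
      (∀ n, C n ⊆ A ∧ (C n).Countable ∧ y ∈ closure (Prod.snd '' C n)) ∧ B ⊆ approxSet f C := by
  let _ := bornTopology 𝔅 hB
  choose C hCA hC hy using fun n : ℕ => hY.exists_countable_subset_mem_closure_image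
    (mem_closure_prod_iff.1 hA _
      (unifBall_mem_nhds hB f hB𝔅 (Nat.one_div_pos_of_nat (n := n))))
  exact ⟨C, fun n => ⟨fun p hp => (hCA n hp).1, hC n, hy n⟩, fun x hx n p hp => (hCA n hp).2 x hx⟩

theorem mem_closure_biUnion_of_isBCover_approxSet {𝒞 : Set (ℕ → Set (CFn X × Y))}
    (h𝒞 : IsBCover 𝔅 (approxSet f '' 𝒞)) (hy : ∀ C ∈ 𝒞, ∀ n, y ∈ closure (Prod.snd '' C n)) :
    letI := bornTopology 𝔅 hB
    (f, y) ∈ closure (⋃ C ∈ 𝒞, ⋃ n, C n) := by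
  let _ := bornTopology 𝔅 hB
  refine mem_closure_prod_iff.2 fun U hU => ?_
  obtain ⟨B, hB𝔅, ε, hε, hBU⟩ := (mem_nhds_bornTopology_iff hB).1 hU
  obtain ⟨_, ⟨C, hC, rfl⟩, hBC⟩ := h𝒞 B hB𝔅
  obtain ⟨n, hn⟩ := exists_nat_one_div_lt hε
  have hCn : C n ⊆ (⋃ C ∈ 𝒞, ⋃ n, C n) ∩ Prod.fst ⁻¹' U := fun p hp =>
    ⟨mem_biUnion hC (mem_iUnion_of_mem n hp), hBU fun x hx => (hBC hx n p hp).trans hn⟩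
  exact closure_mono (image_mono hCn) (hy C hC n)

theorem GδBLindelof.countablyTight_prod (h𝔅 : GδBLindelof 𝔅) (hY : CountablyTight Y) :
    letI := bornTopology 𝔅 hB
    CountablyTight (CFn X × Y) := by
  let _ := bornTopology 𝔅 hB
  rintro ⟨f, y⟩ A hA
  let 𝒞 : Set (ℕ → Set (CFn X × Y)) :=
    {C | ∀ n, C n ⊆ A ∧ (C n).Countable ∧ y ∈ closure (Prod.snd '' C n)}
  have hcov : IsBCover 𝔅 (approxSet f '' 𝒞) := by
    intro B hB𝔅
    obtain ⟨C, hC, hBC⟩ := exists_countable_seq_subset_approxSet hB hY hA hB𝔅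
    exact ⟨_, mem_image_of_mem _ hC, hBC⟩
  obtain ⟨𝒞', h𝒞', hcount, hcov'⟩ := h𝔅.exists_countable_isBCover_image
    (fun C hC => isGδ_approxSet f fun n => (hC n).2.1) hcov
  refine ⟨⋃ C ∈ 𝒞', ⋃ n, C n, ?_, ?_, ?_⟩
  · exact iUnion₂_subset fun C hC => iUnion_subset fun n => (h𝒞' hC n).1
  · exact hcount.biUnion fun C hC => countable_iUnion fun n => (h𝒞' hC n).2.1
  · exact mem_closure_biUnion_of_isBCover_approxSet hB hcov' fun C hC n => (h𝒞' hC n).2.2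

end Approximation

theorem stmt8_general {X : Type u} [TopologicalSpace X] [CompletelyRegularSpace X]
    (𝔅 : Set (Set X)) (hB : IsBornology 𝔅) (hcb : HasCompactBase 𝔅) :
    @ProductivelyCountablyTight (CFn X) (bornTopology 𝔅 hB) ↔
      ∀ 𝒢 : Set (Set X), (∀ G ∈ 𝒢, IsGDeltaSet G) → IsBCover 𝔅 𝒢 →
        ∃ 𝒢' ⊆ 𝒢, 𝒢'.Countable ∧ IsBCover 𝔅 𝒢' :=
  ⟨gδBLindelof_of_productivelyCountablyTight hB hcb,
    fun h𝔅 _ _ hY => GδBLindelof.countablyTight_prod hB h𝔅 hY⟩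

/-- `C_𝔅(X)` is productively countably tight iff every `𝔅`-cover of `X`
consisting of `G_δ`-sets has a countable `𝔅`-subcover. -/
theorem stmt8 {X : Type u} [TopologicalSpace X] [T35Space X]
    (𝔅 : Set (Set X)) (hB : IsBornology 𝔅) (hcb : HasCompactBase 𝔅) :
    @ProductivelyCountablyTight (CFn X) (bornTopology 𝔅 hB) ↔
      ∀ 𝒢 : Set (Set X), (∀ G ∈ 𝒢, IsGDeltaSet G) → IsBCover 𝔅 𝒢 →
        ∃ 𝒢' ⊆ 𝒢, 𝒢'.Countable ∧ IsBCover 𝔅 𝒢' :=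
  stmt8_general 𝔅 hB hcb
end

section
/- Let X be a Tychonoff topological space. If player II has a winning strategy in the game G₁(𝒦, 𝒦) played on X, then X is strongly Alster. -/
open Set Topology

universe u

/-
A reply function of player II to the open `𝔅`-covers must realise *every* open superset of some
`B ∈ 𝔅`: otherwise each `B` has an open superset that is never chosen, and these supersets form an
open cover to which there is no reply. So in any position a member `G` of a `G_δ` `𝔅`-cover is an
intersection of countably many possible answers. Offering only the corresponding covers produces
countably many positions; if a set lay in none of the attached `G`s, player I could keep forcing
answers that do not contain it, and player II would lose.
-/

theorem G1WinII.exists_subtype_strategy {T : Type*} {𝒜 𝒞 : Set (Set T)} (h : G1WinII 𝒜 𝒞) :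
    ∃ σ : (n : ℕ) → (Fin (n + 1) → 𝒜) → T,
      (∀ n p, σ n p ∈ (p (Fin.last n)).1) ∧
      ∀ A : ℕ → 𝒜, (range fun n => σ n fun i => A i) ∈ 𝒞 := by
  obtain ⟨σ, hσ, hwin⟩ := h
  exact ⟨fun n p => σ n fun i => (p i).1, fun n p => hσ n _ fun i => (p i).2,
    fun A => hwin _ fun n => (A n).2⟩

section ReplyFunctions

variable {X : Type*} [TopologicalSpace X] {𝔅 : Set (Set X)} {ρ : OpenBCovers 𝔅 → Set X}

theorem exists_forall_isOpen_mem_range (hρ : ∀ 𝒰, ρ 𝒰 ∈ 𝒰.1) :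
    ∃ B ∈ 𝔅, ∀ U, IsOpen U → B ⊆ U → U ∈ range ρ := by
  by_contra! hmiss
  let 𝒰 : OpenBCovers 𝔅 := ⟨{U | IsOpen U ∧ U ∉ range ρ}, fun _ hU => hU.1, fun B hB =>
    let ⟨U, hU, hBU, hUρ⟩ := hmiss B hB
    ⟨U, ⟨hU, hUρ⟩, hBU⟩⟩
  exact (hρ 𝒰).2 (mem_range_self 𝒰)

theorem IsBCover.exists_eq_iInter_of_isGDeltaSet {𝒢 : Set (Set X)} (h𝒢 : IsBCover 𝔅 𝒢)
    (hδ : ∀ G ∈ 𝒢, IsGDeltaSet G) (hρ : ∀ 𝒰, ρ 𝒰 ∈ 𝒰.1) :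
    ∃ G ∈ 𝒢, ∃ 𝒰 : ℕ → OpenBCovers 𝔅, G = ⋂ k, ρ (𝒰 k) := by
  obtain ⟨B, hB, hrange⟩ := exists_forall_isOpen_mem_range hρ
  obtain ⟨G, hG, hBG⟩ := h𝒢 B hB
  obtain ⟨O, hO, rfl⟩ := isGδ_iff_eq_iInter_nat.1 (hδ G hG)
  choose 𝒰 h𝒰 using fun k => hrange (O k) (hO k) (hBG.trans (iInter_subset O k))
  exact ⟨_, hG, 𝒰, iInter_congr fun k => (h𝒰 k).symm⟩

end ReplyFunctions

section Positions

variable {α : Type*}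

theorem exists_seq_eq_apply_restrict (s : (n : ℕ) → (Fin n → α) → α) :
    ∃ A : ℕ → α, ∀ n, A n = s n fun i => A i := by
  let A : ℕ → α := Nat.strongRec fun n ih => s n fun i => ih i i.2
  exact ⟨A, fun n => Nat.strongRec_eq _ n⟩

theorem snoc_restrict (A : ℕ → α) (n : ℕ) :
    Fin.snoc (α := fun _ => α) (fun i : Fin n => A i) (A n) = fun i : Fin (n + 1) => A i :=
  Fin.snoc_init_self (fun i : Fin (n + 1) => A i)

/-- The positions of length `n` that arise when the next move in each position `p` is one of the
options `m _ p k`, `k : ℕ`: a countable part of the game tree to which player I can keep. -/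
def reachablePositions (m : (n : ℕ) → (Fin n → α) → ℕ → α) : (n : ℕ) → Set (Fin n → α)
  | 0 => univ
  | n + 1 => ⋃ p ∈ reachablePositions m n, range fun k => Fin.snoc p (m n p k)

variable {m : (n : ℕ) → (Fin n → α) → ℕ → α}

variable (m) in
theorem countable_reachablePositions : ∀ n, (reachablePositions m n).Countable
  | 0 => countable_univ
  | n + 1 => (countable_reachablePositions n).biUnion fun _ _ => countable_range _

theorem snoc_mem_reachablePositions {n : ℕ} {p : Fin n → α} (hp : p ∈ reachablePositions m n)
    (k : ℕ) : Fin.snoc p (m n p k) ∈ reachablePositions m (n + 1) :=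
  mem_biUnion hp (mem_range_self k)

theorem restrict_mem_reachablePositions {A : ℕ → α} {k : ℕ → ℕ}
    (hA : ∀ n, A n = m n (fun i => A i) (k n)) :
    ∀ n, (fun i : Fin n => A i) ∈ reachablePositions m n
  | 0 => mem_univ _
  | n + 1 => by
    rw [← snoc_restrict, hA n]
    exact snoc_mem_reachablePositions (restrict_mem_reachablePositions hA n) (k n)

variable (m) in
theorem exists_mem_reachablePositions_forall_snoc {W : (n : ℕ) → (Fin (n + 1) → α) → Prop}
    (hW : ∀ A : ℕ → α, ∃ n, W n fun i => A i) :
    ∃ n, ∃ p ∈ reachablePositions m n, ∀ k, W n (Fin.snoc p (m n p k)) := by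
  by_contra! hfail
  choose! k hk using hfail
  obtain ⟨A, hA⟩ := exists_seq_eq_apply_restrict fun n p => m n p (k n p)
  obtain ⟨n, hn⟩ := hW A
  refine hk n _ (restrict_mem_reachablePositions hA n) ?_
  rwa [← hA, snoc_restrict]

end Positions

theorem stmt11_general {X : Type*} [TopologicalSpace X] {𝔅 𝔇 : Set (Set X)}
    (h : G1WinII (OpenBCovers 𝔅) (OpenBCovers 𝔇)) {𝒢 : Set (Set X)}
    (hδ : ∀ G ∈ 𝒢, IsGDeltaSet G) (h𝒢 : IsBCover 𝔅 𝒢) :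
    ∃ 𝒢' ⊆ 𝒢, 𝒢'.Countable ∧ IsBCover 𝔇 𝒢' := by
  obtain ⟨σ, hσ, hwin⟩ := h.exists_subtype_strategy
  have hanswers (n : ℕ) (p : Fin n → OpenBCovers 𝔅) :
      ∃ G ∈ 𝒢, ∃ 𝒰 : ℕ → OpenBCovers 𝔅, G = ⋂ k, σ n (Fin.snoc p (𝒰 k)) :=
    h𝒢.exists_eq_iInter_of_isGDeltaSet hδ fun 𝒰 => by
      simpa only [Fin.snoc_last] using hσ n (Fin.snoc p 𝒰)
  choose G hG m hm using hanswers
  refine ⟨⋃ n, G n '' reachablePositions m n,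
    iUnion_subset fun n => image_subset_iff.2 fun p _ => hG n p,
    countable_iUnion fun n => (countable_reachablePositions m n).image _, fun D hD => ?_⟩
  have hplay (A : ℕ → OpenBCovers 𝔅) : ∃ n, D ⊆ σ n fun i => A i :=
    exists_range_iff.1 ((hwin A).2 D hD)
  obtain ⟨n, p, hp, hDp⟩ := exists_mem_reachablePositions_forall_snoc m
    (W := fun n p => D ⊆ σ n p) hplay
  exact ⟨G n p, mem_iUnion_of_mem n (mem_image_of_mem _ hp), hm n p ▸ subset_iInter hDp⟩

/-- If player II has a winning strategy in `G₁(𝒦, 𝒦)` on `X`, then `X` is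
strongly Alster. -/
theorem stmt11 {X : Type*} [TopologicalSpace X] [T35Space X]
    (h : G1WinII (KCovers X) (KCovers X)) :
    StronglyAlster X :=
  fun _ => stmt11_general h
end

section
/- Let X be a Tychonoff topological space. If X is strongly Alster, then X satisfies the selection principle S₁(𝒦, 𝒦). -/
open Set Topology

universe u

/-!
Intersecting one member from each of countably many K-covers by `G_δ`-sets gives `G_δ`-sets, and
all such intersections form a single K-cover that refines every cover of the sequence at once.
The strong Alster property extracts a sequence `(G n)` from it that is still a K-cover. As `G n`
lies inside some member `U n` of the `n`-th cover, the diagonal selection `(U n)` is a K-cover.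
-/

/-- The common refinement of a family of covers: all intersections `⋂ i, U i` of one member
`U i` from each cover `𝒰 i`. It replaces the whole family by a single cover. -/
def commonRefinement {X ι : Type*} (𝒰 : ι → Set (Set X)) : Set (Set X) :=
  (fun U : ι → Set X => ⋂ i, U i) '' univ.pi 𝒰

theorem exists_superset_of_mem_commonRefinement {X ι : Type*} {𝒰 : ι → Set (Set X)} {G : Set X}
    (hG : G ∈ commonRefinement 𝒰) (i : ι) : ∃ U ∈ 𝒰 i, G ⊆ U := by
  obtain ⟨U, hU, rfl⟩ := hG
  exact ⟨U i, hU i (mem_univ i), iInter_subset U i⟩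

section

variable {X : Type*} [TopologicalSpace X]

theorem isGDeltaSet_iff_isGδ {G : Set X} : IsGDeltaSet G ↔ IsGδ G :=
  Iff.rfl

theorem IsKCover.nonempty {𝒢 : Set (Set X)} (h𝒢 : IsKCover 𝒢) : 𝒢.Nonempty :=
  let ⟨G, hG, _⟩ := h𝒢 ∅ isCompact_empty
  ⟨G, hG⟩

theorem IsKCover.range_of_subset {ι : Sort*} {G U : ι → Set X} (hG : IsKCover (range G))
    (hGU : ∀ i, G i ⊆ U i) : IsKCover (range U) := by
  intro K hK
  obtain ⟨_, ⟨i, rfl⟩, hKG⟩ := hG K hK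
  exact ⟨U i, mem_range_self i, hKG.trans (hGU i)⟩

theorem isKCover_commonRefinement {ι : Type*} {𝒰 : ι → Set (Set X)} (h𝒰 : ∀ i, IsKCover (𝒰 i)) :
    IsKCover (commonRefinement 𝒰) := by
  intro K hK
  choose U hU hKU using fun i => h𝒰 i K hK
  exact ⟨⋂ i, U i, mem_image_of_mem _ fun i _ => hU i, subset_iInter hKU⟩

theorem isGδ_of_mem_commonRefinement {ι : Type*} [Countable ι] {𝒰 : ι → Set (Set X)}
    (h𝒰 : ∀ i, ∀ U ∈ 𝒰 i, IsGδ U) {G : Set X} (hG : G ∈ commonRefinement 𝒰) : IsGδ G := by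
  obtain ⟨U, hU, rfl⟩ := hG
  exact .iInter fun i => h𝒰 i (U i) (hU i (mem_univ i))

theorem StronglyAlster.exists_seq_isKCover (hX : StronglyAlster X) {𝒢 : Set (Set X)}
    (hGδ : ∀ G ∈ 𝒢, IsGδ G) (h𝒢 : IsKCover 𝒢) :
    ∃ G : ℕ → Set X, (∀ n, G n ∈ 𝒢) ∧ IsKCover (range G) := by
  obtain ⟨𝒢', hsub, hcount, hcover⟩ := hX 𝒢 (fun G hG => isGDeltaSet_iff_isGδ.mpr (hGδ G hG)) h𝒢
  obtain ⟨G, rfl⟩ := hcount.exists_eq_range hcover.nonempty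
  exact ⟨G, fun n => hsub (mem_range_self n), hcover⟩

theorem StronglyAlster.exists_selection_isKCover (hX : StronglyAlster X) {𝒰 : ℕ → Set (Set X)}
    (hGδ : ∀ n, ∀ U ∈ 𝒰 n, IsGδ U) (h𝒰 : ∀ n, IsKCover (𝒰 n)) :
    ∃ U : ℕ → Set X, (∀ n, U n ∈ 𝒰 n) ∧ IsKCover (range U) := by
  obtain ⟨G, hG, hcover⟩ := hX.exists_seq_isKCover
    (fun _ => isGδ_of_mem_commonRefinement hGδ) (isKCover_commonRefinement h𝒰)
  choose U hU hGU using fun n => exists_superset_of_mem_commonRefinement (hG n) n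
  exact ⟨U, hU, hcover.range_of_subset hGU⟩

theorem stmt12_general (hX : StronglyAlster X) : S1 (KCovers X) (KCovers X) := by
  intro 𝒰 h𝒰
  obtain ⟨U, hU, hcover⟩ := hX.exists_selection_isKCover
    (fun n V hV => ((h𝒰 n).1 V hV).isGδ) (fun n => (h𝒰 n).2)
  have hopen : ∀ V ∈ range U, IsOpen V := forall_mem_range.mpr fun n => (h𝒰 n).1 (U n) (hU n)
  exact ⟨U, hU, hopen, hcover⟩

end

/-- If `X` is strongly Alster then `X` satisfies `S₁(𝒦, 𝒦)`. -/
theorem stmt12 {X : Type*} [TopologicalSpace X] [T35Space X]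
    (h : StronglyAlster X) :
    S1 (KCovers X) (KCovers X) :=
  stmt12_general h
end

section
/- Let X be a Hausdorff topological space in which every compact subset is a G_δ-set. Then X is an Alster space if and only if X is σ-compact. -/
open Set Topology

universe u

section

variable {X : Type*} [TopologicalSpace X]

theorem IsKCover.exists_countable_subset_sUnion {𝒢 : Set (Set X)} (h𝒢 : IsKCover 𝒢) {S : Set X}
    (hS : IsSigmaCompact S) : ∃ 𝒢' ⊆ 𝒢, 𝒢'.Countable ∧ S ⊆ ⋃₀ 𝒢' := by
  obtain ⟨K, hK, rfl⟩ := hS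
  choose G hG hKG using fun n => h𝒢 (K n) (hK n)
  refine ⟨range G, range_subset_iff.2 hG, countable_range G, ?_⟩
  rw [sUnion_range]
  exact iUnion_mono hKG

theorem alster_of_isSigmaCompact_univ (hX : IsSigmaCompact (univ : Set X)) : Alster X := by
  intro 𝒢 _ h𝒢
  obtain ⟨𝒢', h𝒢', hcount, hcov⟩ := h𝒢.exists_countable_subset_sUnion hX
  exact ⟨𝒢', h𝒢', hcount, univ_subset_iff.1 hcov⟩

theorem Alster.isSigmaCompact_univ (hA : Alster X)
    (hX : IsKCover {K : Set X | IsCompact K ∧ IsGDeltaSet K}) :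
    IsSigmaCompact (univ : Set X) := by
  obtain ⟨𝒦, h𝒦, hcount, hcov⟩ := hA _ (fun _ hK => hK.2) hX
  rw [← hcov]
  exact isSigmaCompact_sUnion_of_isCompact hcount fun _ hK => (h𝒦 hK).1

theorem stmt15_general (hX : IsKCover {K : Set X | IsCompact K ∧ IsGDeltaSet K}) :
    Alster X ↔ IsSigmaCompact (univ : Set X) :=
  ⟨fun hA => hA.isSigmaCompact_univ hX, alster_of_isSigmaCompact_univ⟩

end

/-- In a Hausdorff space in which every compact subset is a `G_δ`-set,
Alster is equivalent to σ-compactness. -/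
theorem stmt15 {X : Type*} [TopologicalSpace X] [T2Space X]
    (h : ∀ K : Set X, IsCompact K → IsGDeltaSet K) :
    Alster X ↔ ∃ K : ℕ → Set X, (∀ n, IsCompact (K n)) ∧ ⋃ n, K n = Set.univ :=
  stmt15_general fun K hK => ⟨K, ⟨hK, h K hK⟩, Subset.rfl⟩
end
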